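/- arXiv:2009.12838 — 2 statements merged into one kernel-verified Lean document; each statement's English description precedes it below -/
import Mathlib

section
/- (Continuity of the coupling correspondence) Let X, Y be Polish spaces. The correspondence Π : P(X) × P(Y) ⇉ P(X × Y) assigning to (μ,ν) the set of couplings Π(μ,ν) is both upper hemicontinuous and lower hemicontinuous with respect to the weak topologies, and has nonempty, convex, compact values. -/
open MeasureTheory
open scoped ENNReal

variable {X Y : Type*}

/-- The set of couplings of `μ` and `ν`, as a set of probability measures on `X × Y`. -/
def couplings [MetricSpace X] [MeasurableSpace X] [MetricSpace Y] [MeasurableSpace Y]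
    (μ : ProbabilityMeasure X) (ν : ProbabilityMeasure Y) :
    Set (ProbabilityMeasure (X × Y)) :=
  {π | π.toMeasure.map Prod.fst = μ.toMeasure ∧ π.toMeasure.map Prod.snd = ν.toMeasure}

open Set Filter Topology

lemma couplings_aux_num {ι κ : Type*} [Fintype ι] [Fintype κ] (P : ι → κ → ℝ≥0∞)
    (m m' : ι → ℝ≥0∞) (n : κ → ℝ≥0∞) (hP : ∀ i, ∑ j, P i j ≤ m i) :
    ∑ i, ∑ j, (P i j * (m i)⁻¹ * (n j)⁻¹) * (m' i * n j) ≤ ∑ i, m' i := by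
  refine Finset.sum_le_sum fun i _ => ?_
  calc ∑ j, (P i j * (m i)⁻¹ * (n j)⁻¹) * (m' i * n j)
      ≤ ∑ j, P i j * ((m i)⁻¹ * m' i) := by
        refine Finset.sum_le_sum fun j _ => ?_
        calc (P i j * (m i)⁻¹ * (n j)⁻¹) * (m' i * n j)
            = P i j * ((m i)⁻¹ * m' i) * (n j * (n j)⁻¹) := by ring
          _ ≤ P i j * ((m i)⁻¹ * m' i) * 1 := by
              gcongr
              exact ENNReal.mul_inv_le_one _
          _ = _ := mul_one _
    _ = (∑ j, P i j) * ((m i)⁻¹ * m' i) := by rw [Finset.sum_mul]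
    _ ≤ m i * ((m i)⁻¹ * m' i) := by gcongr; exact hP i
    _ = (m i * (m i)⁻¹) * m' i := by ring
    _ ≤ 1 * m' i := by gcongr; exact ENNReal.mul_inv_le_one _
    _ = m' i := one_mul _

/-- A measure whose marginals are dominated extends to a coupling. -/
lemma couplings_extend {α β : Type*} [MeasurableSpace α] [MeasurableSpace β]
    (μ : Measure α) (ν : Measure β) [IsProbabilityMeasure μ] [IsProbabilityMeasure ν]
    (ρ : Measure (α × β)) (h1 : ρ.fst ≤ μ) (h2 : ρ.snd ≤ ν) :
    ∃ π : Measure (α × β), π.fst = μ ∧ π.snd = ν ∧ ρ ≤ π := by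
  have : IsFiniteMeasure ρ := by
    refine ⟨?_⟩
    rw [← Measure.fst_univ]
    exact (h1 _).trans_lt (measure_lt_top _ _)
  set r := μ - ρ.fst with hr
  set s := ν - ρ.snd with hs
  have er : r + ρ.fst = μ := Measure.sub_add_cancel_of_le h1
  have es : s + ρ.snd = ν := Measure.sub_add_cancel_of_le h2
  have mr : r univ = 1 - ρ univ := by
    rw [hr, Measure.sub_apply MeasurableSet.univ h1, Measure.fst_univ]; simp
  have ms : s univ = 1 - ρ univ := by
    rw [hs, Measure.sub_apply MeasurableSet.univ h2, Measure.snd_univ]; simp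
  have htop : (1 - ρ univ) ≠ ∞ := ENNReal.sub_ne_top ENNReal.one_ne_top
  refine ⟨ρ + (1 - ρ univ)⁻¹ • r.prod s, ?_, ?_, Measure.le_add_right le_rfl⟩
  · rw [Measure.fst_add, add_comm]
    conv_rhs => rw [← er]
    congr 1
    rw [Measure.fst, Measure.map_smul, Measure.map_fst_prod, ms, smul_smul]
    by_cases h0 : (1 - ρ univ) = 0
    · have : r = 0 := by rw [← Measure.measure_univ_eq_zero, mr, h0]
      simp [this]
    · rw [ENNReal.inv_mul_cancel h0 htop, one_smul]
  · rw [Measure.snd_add, add_comm]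
    conv_rhs => rw [← es]
    congr 1
    rw [Measure.snd, Measure.map_smul, Measure.map_snd_prod, mr, smul_smul]
    by_cases h0 : (1 - ρ univ) = 0
    · have : s = 0 := by rw [← Measure.measure_univ_eq_zero, ms, h0]
      simp [this]
    · rw [ENNReal.inv_mul_cancel h0 htop, one_smul]

lemma couplings_sum_fiber {α ι : Type*} [MeasurableSpace α] [Fintype ι] (a : α → ι)
    (ha : ∀ i, MeasurableSet (a ⁻¹' {i})) (μ : Measure α) (E : Set α) (hE : MeasurableSet E) :
    ∑ i, μ (E ∩ a ⁻¹' {i}) = μ E := by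
  rw [← measure_biUnion_finset]
  · congr 1
    ext x; simp
  · intro i _ j _ hij
    refine Set.disjoint_left.2 ?_
    rintro x ⟨_, h1⟩ ⟨_, h2⟩
    exact hij (h1.symm.trans h2)
  · exact fun i _ => hE.inter (ha i)

lemma couplings_construct {α β ι κ : Type*} [MeasurableSpace α] [MeasurableSpace β]
    [Fintype ι] [Fintype κ] (a : α → ι) (b : β → κ)
    (ha : ∀ i, MeasurableSet (a ⁻¹' {i})) (hb : ∀ j, MeasurableSet (b ⁻¹' {j}))
    (π : Measure (α × β)) (μ : Measure α) (ν : Measure β)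
    [IsProbabilityMeasure μ] [IsProbabilityMeasure ν] (c : ℝ≥0∞)
    (h1 : ∀ i, c * π.fst (a ⁻¹' {i}) ≤ μ (a ⁻¹' {i}))
    (h2 : ∀ j, c * π.snd (b ⁻¹' {j}) ≤ ν (b ⁻¹' {j})) :
    ∃ π' : Measure (α × β), π'.fst = μ ∧ π'.snd = ν ∧
      ∀ T : Set (ι × κ), c * π (Prod.map a b ⁻¹' T) ≤ π' (Prod.map a b ⁻¹' T) := by
  classical
  set A : ι → Set α := fun i => a ⁻¹' {i} with hA
  set B : κ → Set β := fun j => b ⁻¹' {j} with hB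
  set P : ι → κ → ℝ≥0∞ := fun i j => c * π (A i ×ˢ B j) with hP
  have hP1 : ∀ i, ∑ j, P i j ≤ μ (A i) := by
    intro i
    refine le_trans (le_of_eq ?_) (h1 i)
    rw [hP, ← Finset.mul_sum, Measure.fst_apply (ha i),
      ← couplings_sum_fiber (fun p : α × β => b p.2) (fun j => measurable_snd (hb j)) π _
        (measurable_fst (ha i))]
    rfl
  have hP2 : ∀ j, ∑ i, P i j ≤ ν (B j) := by
    intro j
    refine le_trans (le_of_eq ?_) (h2 j)
    rw [hP, ← Finset.mul_sum, Measure.snd_apply (hb j),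
      ← couplings_sum_fiber (fun p : α × β => a p.1) (fun i => measurable_fst (ha i)) π _
        (measurable_snd (hb j))]
    congr 1
    refine Finset.sum_congr rfl fun i _ => ?_
    congr 1
    rw [inter_comm]; rfl
  set ρ : Measure (α × β) := ∑ i, ∑ j, (P i j * (μ (A i))⁻¹ * (ν (B j))⁻¹) •
    (μ.restrict (A i)).prod (ν.restrict (B j)) with hρ
  have hρE : ∀ (E : Set α) (F : Set β), MeasurableSet E → MeasurableSet F → ρ (E ×ˢ F) =
      ∑ i, ∑ j, (P i j * (μ (A i))⁻¹ * (ν (B j))⁻¹) * (μ (E ∩ A i) * ν (F ∩ B j)) := by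
    intro E F hE hF
    simp only [hρ, Measure.finsetSum_apply, Measure.smul_apply, Measure.prod_prod,
      Measure.restrict_apply hE, Measure.restrict_apply hF, smul_eq_mul]
  obtain ⟨π', e1, e2, hle⟩ := couplings_extend μ ν ρ
    (by
      refine Measure.le_iff.2 fun E hE => ?_
      rw [Measure.fst_apply hE, ← prod_univ, hρE E univ hE MeasurableSet.univ,
        ← couplings_sum_fiber a ha μ E hE]
      simp only [univ_inter]
      exact couplings_aux_num P _ (fun i => μ (E ∩ A i)) _ hP1)
    (by
      refine Measure.le_iff.2 fun F hF => ?_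
      rw [Measure.snd_apply hF, ← univ_prod, hρE univ F MeasurableSet.univ hF,
        ← couplings_sum_fiber b hb ν F hF, Finset.sum_comm]
      simp only [univ_inter]
      refine le_trans (le_of_eq ?_)
        (couplings_aux_num (fun j i => P i j) (fun j => ν (B j)) (fun j => ν (F ∩ B j))
          (fun i => μ (A i)) hP2)
      refine Finset.sum_congr rfl fun j _ => Finset.sum_congr rfl fun i _ => ?_
      ring)
  refine ⟨π', e1, e2, fun T => ?_⟩
  have hcell : ∀ i j, c * π (A i ×ˢ B j) ≤ π' (A i ×ˢ B j) := by
    intro i j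
    refine le_trans ?_ (hle _)
    rw [hρE _ _ (ha i) (hb j)]
    refine le_trans ?_ (Finset.single_le_sum (f := fun i' => ∑ j', (P i' j' * (μ (A i'))⁻¹ *
      (ν (B j'))⁻¹) * (μ (A i ∩ A i') * ν (B j ∩ B j'))) (fun _ _ => zero_le) (Finset.mem_univ i))
    refine le_trans ?_ (Finset.single_le_sum (f := fun j' => (P i j' * (μ (A i))⁻¹ *
      (ν (B j'))⁻¹) * (μ (A i ∩ A i) * ν (B j ∩ B j'))) (fun _ _ => zero_le) (Finset.mem_univ j))
    simp only [inter_self]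
    change P i j ≤ _
    have l1 : P i j ≤ μ (A i) :=
      (Finset.single_le_sum (f := fun j => P i j) (fun _ _ => zero_le)
        (Finset.mem_univ j)).trans (hP1 i)
    have l2 : P i j ≤ ν (B j) :=
      (Finset.single_le_sum (f := fun i => P i j) (fun _ _ => zero_le)
        (Finset.mem_univ i)).trans (hP2 j)
    by_cases z1 : μ (A i) = 0
    · rw [z1] at l1
      exact l1.trans zero_le
    by_cases z2 : ν (B j) = 0
    · rw [z2] at l2
      exact l2.trans zero_le
    have : P i j * (μ (A i))⁻¹ * (ν (B j))⁻¹ * (μ (A i) * ν (B j)) =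
        P i j * ((μ (A i))⁻¹ * μ (A i)) * ((ν (B j))⁻¹ * ν (B j)) := by ring
    rw [this, ENNReal.inv_mul_cancel z1 (measure_ne_top _ _),
      ENNReal.inv_mul_cancel z2 (measure_ne_top _ _), mul_one, mul_one]
  have hfib : ∀ p : ι × κ, Prod.map a b ⁻¹' {p} = A p.1 ×ˢ B p.2 := by
    intro p
    ext x
    simp [hA, hB, Prod.ext_iff]
  have hm : ∀ p : ι × κ, MeasurableSet (Prod.map a b ⁻¹' {p}) := by
    intro p
    rw [hfib]
    exact (ha _).prod (hb _)
  have hT : ∀ m : Measure (α × β), m (Prod.map a b ⁻¹' T) =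
      ∑ p ∈ T.toFinite.toFinset, m (Prod.map a b ⁻¹' {p}) := by
    intro m
    rw [← measure_biUnion_finset]
    · congr 1
      ext x; simp
    · intro p _ q _ hpq
      refine Set.disjoint_left.2 ?_
      intro x h1 h2
      exact hpq (h1.symm.trans h2)
    · exact fun p _ => hm p
  rw [hT, hT, Finset.mul_sum]
  refine Finset.sum_le_sum fun p _ => ?_
  rw [hfib]
  exact hcell _ _

/-- A countable basis of sets with null frontiers. -/
lemma couplings_basis [MetricSpace X] [SecondCountableTopology X]
    [MeasurableSpace X] [BorelSpace X] (μ : Measure X) [IsProbabilityMeasure μ] :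
    ∃ A : ℕ → Set X, (∀ k, IsOpen (A k)) ∧ (∀ k, μ (frontier (A k)) = 0) ∧
      ∀ O, IsOpen O → ∀ x ∈ O, ∃ k, x ∈ A k ∧ A k ⊆ O := by
  have : Nonempty X := nonempty_of_isProbabilityMeasure μ
  have key : ∀ p : ℕ × ℕ, ∃ r ∈ Ioo (1 / ((p.2 : ℝ) + 1)) (2 * (1 / ((p.2 : ℝ) + 1))),
      μ (frontier (Metric.thickening r {TopologicalSpace.denseSeq X p.1})) = 0 := by
    intro p
    refine exists_null_frontier_thickening μ _ ?_
    have : (0 : ℝ) < 1 / ((p.2 : ℝ) + 1) := by positivity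
    linarith
  choose r hr hr0 using key
  refine ⟨fun k => Metric.thickening (r k.unpair) {TopologicalSpace.denseSeq X k.unpair.1},
    fun k => Metric.isOpen_thickening, fun k => hr0 _, ?_⟩
  intro O hO x hx
  obtain ⟨ε, hε, hb⟩ := Metric.isOpen_iff.1 hO x hx
  obtain ⟨n, hn⟩ := exists_nat_one_div_lt (show (0 : ℝ) < ε / 4 by positivity)
  obtain ⟨m, hm⟩ := Metric.denseRange_iff.1 (TopologicalSpace.denseRange_denseSeq X) x
    (1 / ((n : ℝ) + 1)) (by positivity)
  refine ⟨Nat.pair m n, ?_, ?_⟩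
  · simp only [Nat.unpair_pair, Metric.thickening_singleton, Metric.mem_ball]
    exact hm.trans (hr (m, n)).1
  · simp only [Nat.unpair_pair, Metric.thickening_singleton]
    refine Subset.trans ?_ hb
    intro y hy
    rw [Metric.mem_ball] at hy ⊢
    have h2 := (hr (m, n)).2
    simp only at h2
    have h3 := dist_triangle_right y x (TopologicalSpace.denseSeq X m)
    linarith

/-- Cells of the finite partition generated by the first `n` sets. -/
lemma couplings_cell_meas [MetricSpace X] [MeasurableSpace X] [BorelSpace X]
    (A : ℕ → Set X) (hA : ∀ k, IsOpen (A k)) (n : ℕ) (i : Fin n → Prop) :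
    MeasurableSet ((fun x (k : Fin n) => x ∈ A k) ⁻¹' {i}) := by
  have : (fun x (k : Fin n) => x ∈ A k) ⁻¹' {i} = ⋂ k : Fin n, {x | x ∈ A k ↔ i k} := by
    ext x
    simp [funext_iff]
  rw [this]
  refine MeasurableSet.iInter fun k => ?_
  by_cases h : i k
  · simpa [h] using (hA k).measurableSet
  · have : {x | x ∈ A k ↔ i k} = (A k)ᶜ := by ext x; simp [h]
    rw [this]
    exact (hA k).measurableSet.compl

lemma couplings_cell_nhds [MetricSpace X] [MeasurableSpace X] [BorelSpace X]
    (μ : ProbabilityMeasure X) (A : ℕ → Set X)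
    (hA0 : ∀ k, (μ : Measure X) (frontier (A k)) = 0) (n : ℕ) (i : Fin n → Prop)
    (c : ℝ≥0∞) (hc : c < 1) :
    ∀ᶠ μ' : ProbabilityMeasure X in 𝓝 μ, c * (μ : Measure X) ((fun x (k : Fin n) => x ∈ A k) ⁻¹' {i}) ≤
      (μ' : Measure X) ((fun x (k : Fin n) => x ∈ A k) ⁻¹' {i}) := by
  have e : (fun x (k : Fin n) => x ∈ A k) ⁻¹' {i} = ⋂ k : Fin n, {x | x ∈ A k ↔ i k} := by
    ext x
    simp [funext_iff]
  set C := (fun x (k : Fin n) => x ∈ A k) ⁻¹' {i} with hC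
  have hfr : ∀ k : Fin n, (μ : Measure X) (frontier {x | x ∈ A k ↔ i k}) = 0 := by
    intro k
    by_cases h : i k
    · simpa [h] using hA0 k
    · have : {x | x ∈ A k ↔ i k} = (A k)ᶜ := by ext x; simp [h]
      rw [this, frontier_compl]
      exact hA0 k
  have hint : (μ : Measure X) C ≤ (μ : Measure X) (interior C) := by
    have hsub : C ⊆ interior C ∪ ⋃ k : Fin n, frontier {x | x ∈ A k ↔ i k} := by
      intro x hx
      by_contra hcon
      rw [e, interior_iInter_of_finite] at hcon
      simp only [mem_union, mem_iInter, mem_iUnion, not_or, not_exists, not_forall] at hcon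
      obtain ⟨⟨k, hk⟩, h2⟩ := hcon
      rw [e] at hx
      exact h2 k ⟨subset_closure (mem_iInter.1 hx k), hk⟩
    calc (μ : Measure X) C ≤ _ := measure_mono hsub
      _ ≤ _ := measure_union_le _ _
      _ = (μ : Measure X) (interior C) := by
        rw [measure_iUnion_null hfr, add_zero]
  by_cases h0 : (μ : Measure X) C = 0
  · exact Eventually.of_forall fun μ' => by simp [h0]
  have hlt : c * (μ : Measure X) C < (μ : Measure X) (interior C) := by
    refine lt_of_lt_of_le ?_ hint
    calc c * (μ : Measure X) C < 1 * (μ : Measure X) C :=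
          ENNReal.mul_lt_mul_left h0 (measure_ne_top _ _) hc
      _ = _ := one_mul _
  have hl := ProbabilityMeasure.le_liminf_measure_open_of_tendsto
    (tendsto_id : Tendsto id (𝓝 μ) (𝓝 μ)) (isOpen_interior (s := C))
  filter_upwards [eventually_lt_of_lt_liminf (hlt.trans_le hl)] with μ' h
  exact h.le.trans (measure_mono interior_subset)

lemma couplings_lhc
    [MetricSpace X] [SecondCountableTopology X] [MeasurableSpace X] [BorelSpace X]
    [MetricSpace Y] [SecondCountableTopology Y] [MeasurableSpace Y] [BorelSpace Y]
    (μ : ProbabilityMeasure X) (ν : ProbabilityMeasure Y)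
    (U : Set (ProbabilityMeasure (X × Y))) (hU : IsOpen U)
    (h : (couplings μ ν ∩ U).Nonempty) :
    ∃ V ∈ nhds (μ, ν), ∀ p : ProbabilityMeasure X × ProbabilityMeasure Y,
          p ∈ V → (couplings p.1 p.2 ∩ U).Nonempty := by
  obtain ⟨π, ⟨hπ1, hπ2⟩, hπU⟩ := h
  obtain ⟨A, hAo, hA0, hAb⟩ := couplings_basis (μ : Measure X)
  obtain ⟨B, hBo, hB0, hBb⟩ := couplings_basis (ν : Measure Y)
  set c : ℕ → ℝ≥0∞ := fun n => 1 - ((n : ℝ≥0∞) + 1)⁻¹ with hc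
  have hc1 : ∀ n, c n < 1 := by
    intro n
    refine ENNReal.sub_lt_self ENNReal.one_ne_top one_ne_zero ?_
    exact ENNReal.inv_ne_zero.2 (by finiteness)
  have hclim : Tendsto c atTop (𝓝 1) := by
    have h1 : Tendsto (fun n : ℕ => ((n : ℝ≥0∞) + 1)⁻¹) atTop (𝓝 0) := by
      have := (tendsto_add_atTop_iff_nat 1).2 ENNReal.tendsto_inv_nat_nhds_zero
      simpa using this
    have := ENNReal.Tendsto.sub (tendsto_const_nhds (x := (1 : ℝ≥0∞))) h1
      (Or.inl ENNReal.one_ne_top)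
    simpa using this
  set V : ℕ → Set (ProbabilityMeasure X × ProbabilityMeasure Y) := fun n => {p |
    (∀ i, c n * (μ : Measure X) ((fun x (k : Fin n) => x ∈ A k) ⁻¹' {i}) ≤
      (p.1 : Measure X) ((fun x (k : Fin n) => x ∈ A k) ⁻¹' {i})) ∧
    (∀ i, c n * (ν : Measure Y) ((fun x (k : Fin n) => x ∈ B k) ⁻¹' {i}) ≤
      (p.2 : Measure Y) ((fun x (k : Fin n) => x ∈ B k) ⁻¹' {i}))} with hV
  have hVn : ∀ n, V n ∈ 𝓝 (μ, ν) := by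
    intro n
    have e1 := eventually_all.2 fun i => couplings_cell_nhds μ A hA0 n i (c n) (hc1 n)
    have e2 := eventually_all.2 fun i => couplings_cell_nhds ν B hB0 n i (c n) (hc1 n)
    exact ((continuous_fst.tendsto (μ, ν)).eventually e1).and
      ((continuous_snd.tendsto (μ, ν)).eventually e2)
  by_contra hcon
  push Not at hcon
  choose p hpV hp using fun n => hcon (V n) (hVn n)
  have hex : ∀ n, ∃ π' : ProbabilityMeasure (X × Y), π' ∈ couplings (p n).1 (p n).2 ∧
      ∀ T : Set ((Fin n → Prop) × (Fin n → Prop)),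
        c n * (π : Measure (X × Y)) (Prod.map (fun x (k : Fin n) => x ∈ A k)
          (fun x (k : Fin n) => x ∈ B k) ⁻¹' T) ≤
        (π' : Measure (X × Y)) (Prod.map (fun x (k : Fin n) => x ∈ A k)
          (fun x (k : Fin n) => x ∈ B k) ⁻¹' T) := by
    intro n
    have : Fintype (Fin n → Prop) := Fintype.ofFinite _
    obtain ⟨π', e1, e2, h⟩ := couplings_construct (fun x (k : Fin n) => x ∈ A k)
      (fun x (k : Fin n) => x ∈ B k) (couplings_cell_meas A hAo n) (couplings_cell_meas B hBo n)
      (π : Measure (X × Y)) ((p n).1 : Measure X) ((p n).2 : Measure Y) (c n)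
      (fun i => by rw [Measure.fst, hπ1]; exact (hpV n).1 i)
      (fun i => by rw [Measure.snd, hπ2]; exact (hpV n).2 i)
    have hprob : IsProbabilityMeasure π' := by
      refine ⟨?_⟩
      rw [← Measure.fst_univ, e1]
      simp
    exact ⟨⟨π', hprob⟩, ⟨e1, e2⟩, h⟩
  choose π' hπ' hle using hex
  have hlim : Tendsto π' atTop (𝓝 π) := by
    refine tendsto_of_forall_isOpen_le_liminf_nat' fun G hG => ?_
    set R : ℕ → Set (X × Y) := fun n => Prod.map (fun x (k : Fin n) => x ∈ A k)
          (fun x (k : Fin n) => x ∈ B k) ⁻¹' {q | ∃ k l : Fin n, A k ×ˢ B l ⊆ G ∧ q.1 k ∧ q.2 l}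
      with hR
    have hRmem : ∀ n z, z ∈ R n ↔ ∃ k l : Fin n, A k ×ˢ B l ⊆ G ∧ z.1 ∈ A k ∧ z.2 ∈ B l :=
      fun n z => Iff.rfl
    have hRG : ∀ n, R n ⊆ G := by
      intro n z hz
      obtain ⟨k, l, hs, h1, h2⟩ := (hRmem n z).1 hz
      exact hs ⟨h1, h2⟩
    have hmono : Monotone R := by
      intro m n hmn z hz
      obtain ⟨k, l, hs, h1, h2⟩ := (hRmem m z).1 hz
      exact (hRmem n z).2 ⟨Fin.castLE hmn k, Fin.castLE hmn l, hs, h1, h2⟩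
    have hUn : ⋃ n, R n = G := by
      refine Subset.antisymm (iUnion_subset hRG) ?_
      rintro ⟨x, y⟩ hz
      obtain ⟨O₁, O₂, ho1, ho2, hx, hy, hs⟩ := isOpen_prod_iff.1 hG x y hz
      obtain ⟨k, hk, hkO⟩ := hAb O₁ ho1 x hx
      obtain ⟨l, hl, hlO⟩ := hBb O₂ ho2 y hy
      refine mem_iUnion.2 ⟨max k l + 1, (hRmem _ _).2
        ⟨⟨k, by omega⟩, ⟨l, by omega⟩, (prod_mono hkO hlO).trans hs, hk, hl⟩⟩
    have ht : Tendsto (fun n => (π : Measure (X × Y)) (R n)) atTop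
        (𝓝 ((π : Measure (X × Y)) G)) := by
      have := tendsto_measure_iUnion_atTop (μ := (π : Measure (X × Y))) hmono
      rwa [hUn] at this
    have ht2 : Tendsto (fun n => c n * (π : Measure (X × Y)) (R n)) atTop
        (𝓝 ((π : Measure (X × Y)) G)) := by
      have := ENNReal.Tendsto.mul hclim (Or.inl one_ne_zero) ht (Or.inr ENNReal.one_ne_top)
      simpa using this
    rw [← ht2.liminf_eq]
    refine liminf_le_liminf (Eventually.of_forall fun n => ?_)
    exact (hle n _).trans (measure_mono (hRG n))
  obtain ⟨n, hn⟩ := (hlim.eventually (hU.mem_nhds hπU)).exists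
  have : π' n ∈ couplings (p n).1 (p n).2 ∩ U := ⟨hπ' n, hn⟩
  rw [hp n] at this
  exact this

/-- The pair of marginals. -/
noncomputable def couplingsMarginals [MetricSpace X] [MeasurableSpace X]
    [MetricSpace Y] [MeasurableSpace Y]
    (π : ProbabilityMeasure (X × Y)) : ProbabilityMeasure X × ProbabilityMeasure Y :=
  (π.map measurable_fst.aemeasurable, π.map measurable_snd.aemeasurable)

lemma mem_couplings_iff [MetricSpace X] [MeasurableSpace X]
    [MetricSpace Y] [MeasurableSpace Y] (π : ProbabilityMeasure (X × Y))
    (p : ProbabilityMeasure X × ProbabilityMeasure Y) :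
    π ∈ couplings p.1 p.2 ↔ couplingsMarginals π = p := by
  rw [Prod.ext_iff]
  exact and_congr (Subtype.ext_iff (a1 := (couplingsMarginals π).1)).symm
    (Subtype.ext_iff (a1 := (couplingsMarginals π).2)).symm

lemma couplings_proper
    [MetricSpace X] [CompleteSpace X] [SecondCountableTopology X]
    [MeasurableSpace X] [BorelSpace X]
    [MetricSpace Y] [CompleteSpace Y] [SecondCountableTopology Y]
    [MeasurableSpace Y] [BorelSpace Y] :
    IsProperMap (couplingsMarginals : ProbabilityMeasure (X × Y) → _) := by
  have hcont : Continuous (couplingsMarginals : ProbabilityMeasure (X × Y) → _) :=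
    (ProbabilityMeasure.continuous_map continuous_fst).prodMk
      (ProbabilityMeasure.continuous_map continuous_snd)
  refine isProperMap_iff_isCompact_preimage.2 ⟨hcont, fun K hK => ?_⟩
  have hcl : IsClosed (couplingsMarginals ⁻¹' K : Set (ProbabilityMeasure (X × Y))) :=
    hK.isClosed.preimage hcont
  rw [← hcl.closure_eq]
  refine isCompact_closure_of_isTightMeasureSet (IsTightMeasureSet.prodMk ?_ ?_)
  · have h1 : IsCompact (closure (Prod.fst '' K)) := (hK.image continuous_fst).closure
    refine (isTightMeasureSet_of_isCompact_closure h1).subset ?_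
    rintro _ ⟨_, ⟨π, hπ, rfl⟩, rfl⟩
    exact ⟨_, ⟨_, hπ, rfl⟩, rfl⟩
  · have h1 : IsCompact (closure (Prod.snd '' K)) := (hK.image continuous_snd).closure
    refine (isTightMeasureSet_of_isCompact_closure h1).subset ?_
    rintro _ ⟨_, ⟨π, hπ, rfl⟩, rfl⟩
    exact ⟨_, ⟨_, hπ, rfl⟩, rfl⟩

/-- Continuity of the coupling correspondence `(μ,ν) ↦ Π(μ,ν)`: it is upper and lower
hemicontinuous for the weak topologies, with nonempty, convex, compact values. -/
theorem couplings_correspondence_continuous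
    [MetricSpace X] [CompleteSpace X] [SecondCountableTopology X]
    [MeasurableSpace X] [BorelSpace X]
    [MetricSpace Y] [CompleteSpace Y] [SecondCountableTopology Y]
    [MeasurableSpace Y] [BorelSpace Y] :
    ∀ (μ : ProbabilityMeasure X) (ν : ProbabilityMeasure Y),
      -- nonempty values
      (couplings μ ν).Nonempty ∧
      -- convex values
      (∀ π₁ ∈ couplings μ ν, ∀ π₂ ∈ couplings μ ν, ∀ t : ℝ≥0∞, t ≤ 1 →
        ∃ π ∈ couplings μ ν, π.toMeasure = t • π₁.toMeasure + (1 - t) • π₂.toMeasure) ∧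
      -- compact values
      IsCompact (couplings μ ν) ∧
      -- upper hemicontinuity
      (∀ U : Set (ProbabilityMeasure (X × Y)), IsOpen U → couplings μ ν ⊆ U →
        ∃ V ∈ nhds (μ, ν), ∀ p : ProbabilityMeasure X × ProbabilityMeasure Y,
          p ∈ V → couplings p.1 p.2 ⊆ U) ∧
      -- lower hemicontinuity
      (∀ U : Set (ProbabilityMeasure (X × Y)), IsOpen U → (couplings μ ν ∩ U).Nonempty →
        ∃ V ∈ nhds (μ, ν), ∀ p : ProbabilityMeasure X × ProbabilityMeasure Y,
          p ∈ V → (couplings p.1 p.2 ∩ U).Nonempty) := by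
  intro μ ν
  have hset : couplings μ ν = couplingsMarginals ⁻¹' {(μ, ν)} := by
    ext π
    exact mem_couplings_iff π (μ, ν)
  refine ⟨?_, ?_, ?_, ?_, fun U hU h => couplings_lhc μ ν U hU h⟩
  · refine ⟨⟨(μ : Measure X).prod (ν : Measure Y), inferInstance⟩, ?_, ?_⟩
    · simp
    · simp
  · rintro π₁ ⟨h1, h2⟩ π₂ ⟨h3, h4⟩ t ht
    have hp : IsProbabilityMeasure (t • π₁.toMeasure + (1 - t) • π₂.toMeasure) := by
      refine ⟨?_⟩
      simp [add_tsub_cancel_of_le ht]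
    refine ⟨⟨_, hp⟩, ⟨?_, ?_⟩, rfl⟩
    · change Measure.map _ (t • π₁.toMeasure + (1 - t) • π₂.toMeasure) = _
      rw [Measure.map_add _ _ measurable_fst, Measure.map_smul, Measure.map_smul, h1, h3,
        ← add_smul, add_tsub_cancel_of_le ht, one_smul]
    · change Measure.map _ (t • π₁.toMeasure + (1 - t) • π₂.toMeasure) = _
      rw [Measure.map_add _ _ measurable_snd, Measure.map_smul, Measure.map_smul, h2, h4,
        ← add_smul, add_tsub_cancel_of_le ht, one_smul]
  · rw [hset]
    exact couplings_proper.isCompact_preimage isCompact_singleton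
  · intro U hU hsub
    refine ⟨(couplingsMarginals '' Uᶜ)ᶜ,
      (couplings_proper.isClosedMap _ hU.isClosed_compl).isOpen_compl.mem_nhds ?_, ?_⟩
    · rintro ⟨π, hπ, he⟩
      exact hπ (hsub ((mem_couplings_iff π (μ, ν)).2 he))
    · intro p hp π hπ
      by_contra hc
      exact hp ⟨π, hc, (mem_couplings_iff π p).1 hπ⟩
end

section
/- (Continuity of the optimal transport value) Let X, Y be Polish spaces and Φ : X × Y → ℝ a bounded continuous function. Then the value function V(μ,ν) = sup{∫ Φ dπ : π ∈ Π(μ,ν)} is continuous on P(X) × P(Y) with the weak topologies. -/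
open MeasureTheory

variable {X Y : Type*}

open Filter Topology in
lemma ot_extend {X : Type*} [MeasurableSpace X] (μ μ' : Measure X) [IsProbabilityMeasure μ]
    [IsProbabilityMeasure μ'] (α : Measure (X × X)) (h1 : α.fst ≤ μ) (h2 : α.snd ≤ μ')
    (h : α Set.univ < 1) :
    ∃ γ : Measure (X × X), γ.fst = μ ∧ γ.snd = μ' ∧
      ∀ s, γ s ≤ α s + (1 - α Set.univ) := by
  have hfin : IsFiniteMeasure α := ⟨h.trans ENNReal.one_lt_top⟩
  set c : ENNReal := 1 - α Set.univ with hc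
  have hc0 : c ≠ 0 := (tsub_pos_of_lt h).ne'
  have hct : c ≠ ⊤ := ne_top_of_le_ne_top ENNReal.one_ne_top tsub_le_self
  have m1 : (μ - α.fst) Set.univ = c := by
    rw [Measure.sub_apply MeasurableSet.univ h1, Measure.fst_univ, measure_univ]
  have m2 : (μ' - α.snd) Set.univ = c := by
    rw [Measure.sub_apply MeasurableSet.univ h2, Measure.snd_univ, measure_univ]
  have hi : c⁻¹ * c = 1 := ENNReal.inv_mul_cancel hc0 hct
  refine ⟨α + c⁻¹ • (μ - α.fst).prod (μ' - α.snd), ?_, ?_, ?_⟩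
  · rw [Measure.fst_add]
    have : (c⁻¹ • (μ - α.fst).prod (μ' - α.snd)).fst = μ - α.fst := by
      rw [Measure.fst, Measure.map_smul, Measure.map_fst_prod, m2, smul_smul, hi, one_smul]
    rw [this, add_comm, Measure.sub_add_cancel_of_le h1]
  · rw [Measure.snd_add]
    have : (c⁻¹ • (μ - α.fst).prod (μ' - α.snd)).snd = μ' - α.snd := by
      rw [Measure.snd, Measure.map_smul, Measure.map_snd_prod, m1, smul_smul, hi, one_smul]
    rw [this, add_comm, Measure.sub_add_cancel_of_le h2]
  · intro s
    rw [Measure.add_apply]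
    gcongr
    calc (c⁻¹ • (μ - α.fst).prod (μ' - α.snd)) s
        ≤ (c⁻¹ • (μ - α.fst).prod (μ' - α.snd)) Set.univ := measure_mono (Set.subset_univ _)
      _ = c := by
        rw [Measure.smul_apply, ← Set.univ_prod_univ, Measure.prod_prod, m1, m2, smul_eq_mul,
          ← mul_assoc, hi, one_mul]

/-- Disjoint small pieces with null boundary. -/
lemma ot_pieces {X : Type*} [MetricSpace X] [SecondCountableTopology X] [MeasurableSpace X]
    [BorelSpace X] (μ : Measure X) [IsProbabilityMeasure μ] {δ : ℝ} (hδ : 0 < δ) :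
    ∃ A : ℕ → Set X, (∀ i, MeasurableSet (A i)) ∧ Pairwise (Function.onFun Disjoint A) ∧
      (⋃ i, A i = Set.univ) ∧ (∀ i, μ (frontier (A i)) = 0) ∧
      ∀ i, ∀ x ∈ A i, ∀ y ∈ A i, dist x y < δ := by
  have hne : Nonempty X := nonempty_of_isProbabilityMeasure μ
  have key := fun i : ℕ => exists_null_frontier_thickening μ
    {TopologicalSpace.denseSeq X i} (show δ / 4 < δ / 2 by linarith)
  choose r hr hrμ using key
  simp only [Metric.thickening_singleton] at hrμ
  let B : ℕ → Set X := fun i => Metric.ball (TopologicalSpace.denseSeq X i) (r i)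
  refine ⟨disjointed B, ?_, disjoint_disjointed B, ?_, ?_, ?_⟩
  · exact MeasurableSet.disjointed (fun i => Metric.isOpen_ball.measurableSet)
  · rw [iUnion_disjointed, Set.eq_univ_iff_forall]
    intro x
    obtain ⟨i, hi⟩ := (TopologicalSpace.denseRange_denseSeq X).exists_dist_lt x
      (show 0 < δ / 4 by linarith)
    exact Set.mem_iUnion.2 ⟨i, hi.trans (hr i).1⟩
  · intro i
    refine disjointedRec (p := fun s => μ (frontier s) = 0) ?_ (hrμ i)
    intro t j ht
    have : frontier (t \ B j) ⊆ frontier t ∪ frontier (B j) := by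
      rw [Set.sdiff_eq]
      refine (frontier_inter_subset _ _).trans ?_
      rw [frontier_compl]
      exact Set.union_subset_union Set.inter_subset_left Set.inter_subset_right
    exact measure_mono_null this (measure_union_null ht (hrμ j))
  · intro i x hx y hy
    have h1 := disjointed_subset B i hx
    have h2 := disjointed_subset B i hy
    have h3 := (hr i).2
    simp only [B, Metric.mem_ball] at h1 h2
    linarith [dist_triangle_right x y (TopologicalSpace.denseSeq X i)]

open Filter Topology in
lemma ot_strassen {X : Type*} [MetricSpace X] [SecondCountableTopology X] [MeasurableSpace X]
    [BorelSpace X] (μ : ProbabilityMeasure X) {δ : ℝ} (hδ : 0 < δ) (hδ1 : δ < 1) :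
    ∀ᶠ μ' : ProbabilityMeasure X in 𝓝 μ, ∃ γ : Measure (X × X), γ.fst = μ.toMeasure ∧
      γ.snd = μ'.toMeasure ∧ γ {p | δ ≤ dist p.1 p.2} ≤ ENNReal.ofReal δ := by
  obtain ⟨A, hAm, hAd, hAu, hAf, hAs⟩ := ot_pieces μ.toMeasure hδ
  set t : ENNReal := ENNReal.ofReal (1 - δ / 2) with ht
  have ht1 : t < 1 := by
    rw [ht, ENNReal.ofReal_lt_one]; linarith
  have htt : 1 ≤ ENNReal.ofReal δ + t * t := by
    rw [ht, ← ENNReal.ofReal_mul (by linarith), ← ENNReal.ofReal_add hδ.le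
      (mul_nonneg (by linarith) (by linarith)), ENNReal.one_le_ofReal]
    nlinarith
  have hsum : ∑' i, μ.toMeasure (A i) = 1 := by
    rw [← measure_iUnion hAd hAm, hAu, measure_univ]
  obtain ⟨N, hN⟩ : ∃ N : ℕ, t < ∑ i ∈ Finset.range N, μ.toMeasure (A i) := by
    have := ENNReal.tendsto_nat_tsum (fun i => μ.toMeasure (A i))
    rw [hsum] at this
    exact (this.eventually (lt_mem_nhds ht1)).exists
  have hsumle : ∀ m : Measure X, ∀ s, MeasurableSet s →
      ∑ i ∈ Finset.range N, m.restrict (A i) s ≤ m s := by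
    intro m s hs
    calc ∑ i ∈ Finset.range N, m.restrict (A i) s
        ≤ ∑' i, m.restrict (A i) s := ENNReal.sum_le_tsum _
      _ = m.restrict (⋃ i, A i) s := by
        rw [Measure.restrict_iUnion hAd hAm, Measure.sum_apply _ hs]
      _ = m s := by rw [hAu, Measure.restrict_univ]
  have hev : ∀ᶠ μ' : ProbabilityMeasure X in 𝓝 μ, ∀ i ∈ Finset.range N,
      t * μ.toMeasure (A i) ≤ μ'.toMeasure (A i) := by
    rw [Filter.eventually_all_finset]
    intro i _
    rcases eq_or_ne (μ.toMeasure (A i)) 0 with h0 | h0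
    · simp [h0]
    · have hlt : t * μ.toMeasure (A i) < μ.toMeasure (A i) := by
        conv_rhs => rw [← one_mul (μ.toMeasure (A i))]
        exact ENNReal.mul_lt_mul_left h0 (measure_ne_top _ _) ht1
      have := ProbabilityMeasure.tendsto_measure_of_null_frontier_of_tendsto'
        (tendsto_id (x := 𝓝 μ)) (hAf i)
      exact (this.eventually (lt_mem_nhds hlt)).mono fun _ h => h.le
  filter_upwards [hev] with μ' hμ'
  set m := μ.toMeasure
  set m' := μ'.toMeasure
  let α : Measure (X × X) := ∑ i ∈ Finset.range N,
    (t * (m' (A i))⁻¹) • (m.restrict (A i)).prod (m'.restrict (A i))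
  have hα : ∀ s, α s = ∑ i ∈ Finset.range N,
    (t * (m' (A i))⁻¹) * (m.restrict (A i)).prod (m'.restrict (A i)) s := by
    intro s; simp [α, Measure.finsetSum_apply]
  have hprod : ∀ i, t * (m' (A i))⁻¹ * m' (A i) ≤ 1 := by
    intro i
    rw [mul_assoc]
    exact mul_le_one' ht1.le (ENNReal.inv_mul_le_one _)
  have hprod' : ∀ i ∈ Finset.range N, t * (m' (A i))⁻¹ * m (A i) ≤ 1 := by
    intro i hi
    rw [mul_right_comm, ← div_eq_mul_inv]
    exact ENNReal.div_le_of_le_mul (by rw [one_mul]; exact hμ' i hi)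
  have h1 : α.fst ≤ m := by
    refine Measure.le_iff.2 fun s hs => ?_
    rw [Measure.fst_apply hs, hα]
    refine le_trans (Finset.sum_le_sum fun i _ => ?_) (hsumle m s hs)
    rw [← Set.prod_univ, Measure.prod_prod, Measure.restrict_apply_univ, mul_comm (m.restrict _ _),
      ← mul_assoc]
    exact mul_le_of_le_one_left zero_le (hprod i)
  have h2 : α.snd ≤ m' := by
    refine Measure.le_iff.2 fun s hs => ?_
    rw [Measure.snd_apply hs, hα]
    refine le_trans (Finset.sum_le_sum fun i hi => ?_) (hsumle m' s hs)
    rw [← Set.univ_prod, Measure.prod_prod, Measure.restrict_apply_univ, ← mul_assoc]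
    exact mul_le_of_le_one_left zero_le (hprod' i hi)
  have hαu : α Set.univ = t * ∑ i ∈ Finset.range N, m (A i) := by
    rw [hα, Finset.mul_sum]
    refine Finset.sum_congr rfl fun i hi => ?_
    rw [← Set.univ_prod_univ, Measure.prod_prod, Measure.restrict_apply_univ,
      Measure.restrict_apply_univ]
    rcases eq_or_ne (m (A i)) 0 with h0 | h0
    · simp [h0]
    · have ht0 : t ≠ 0 := by
        rw [ht, Ne, ENNReal.ofReal_eq_zero]; linarith
      have hne : m' (A i) ≠ 0 := fun h => by
        have := hμ' i hi
        rw [h, nonpos_iff_eq_zero, mul_eq_zero] at this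
        tauto
      calc t * (m' (A i))⁻¹ * (m (A i) * m' (A i))
          = t * m (A i) * ((m' (A i))⁻¹ * m' (A i)) := by ring
        _ = t * m (A i) := by
          rw [ENNReal.inv_mul_cancel hne (measure_ne_top _ _), mul_one]
  have hle1 : ∑ i ∈ Finset.range N, m (A i) ≤ 1 := hsum ▸ ENNReal.sum_le_tsum _
  have hlt : α Set.univ < 1 := by
    rw [hαu]
    exact lt_of_le_of_lt (mul_le_of_le_one_right zero_le hle1) ht1
  obtain ⟨γ, g1, g2, g3⟩ := ot_extend m m' α h1 h2 hlt
  refine ⟨γ, g1, g2, (g3 _).trans ?_⟩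
  have hbad : α {p | δ ≤ dist p.1 p.2} = 0 := by
    rw [hα]
    refine Finset.sum_eq_zero fun i _ => ?_
    rw [Measure.prod_restrict, Measure.restrict_apply, Set.eq_empty_of_forall_notMem
      (s := {p : X × X | δ ≤ dist p.1 p.2} ∩ A i ×ˢ A i), measure_empty, mul_zero]
    · rintro p ⟨hp, hp1, hp2⟩
      exact absurd (hAs i _ hp1 _ hp2) (not_lt.2 hp)
    · exact (isClosed_le continuous_const (by fun_prop)).measurableSet
  rw [hbad, zero_add, tsub_le_iff_right, hαu]
  refine htt.trans ?_
  gcongr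

/-- Gluing a coupling with transports of its marginals. -/
lemma ot_glue {X Y : Type*} [MeasurableSpace X] [StandardBorelSpace X]
    [MeasurableSpace Y] [StandardBorelSpace Y]
    (π : Measure (X × Y)) [IsProbabilityMeasure π]
    (γ : Measure (X × X)) (η : Measure (Y × Y)) [IsProbabilityMeasure γ] [IsProbabilityMeasure η]
    (hγ : γ.fst = π.fst) (hη : η.fst = π.snd) :
    ∃ ρ : Measure ((X × Y) × (X × Y)), IsProbabilityMeasure ρ ∧ ρ.fst = π ∧
      ρ.map (fun q => (q.1.1, q.2.1)) = γ ∧ ρ.map (fun q => (q.1.2, q.2.2)) = η := by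
  have hne : Nonempty (X × Y) := nonempty_of_isProbabilityMeasure π
  have hX : Nonempty X := hne.map Prod.fst
  have hY : Nonempty Y := hne.map Prod.snd
  let κ : ProbabilityTheory.Kernel (X × Y) X := γ.condKernel.comap (Prod.fst : X × Y → X) measurable_fst
  let l : ProbabilityTheory.Kernel (X × Y) Y := η.condKernel.comap (Prod.snd : X × Y → Y) measurable_snd
  have d1 := γ.disintegrate γ.condKernel
  have d2 := η.disintegrate η.condKernel
  refine ⟨π.compProd (κ.prod l), inferInstance, Measure.fst_compProd _ _, ?_, ?_⟩
  · ext s hs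
    conv_rhs => rw [← d1, hγ]
    have hm : Measurable (fun q : (X × Y) × (X × Y) => (q.1.1, q.2.1)) := by fun_prop
    rw [Measure.map_apply hm hs, Measure.compProd_apply (hm hs), Measure.compProd_apply hs,
      Measure.fst, lintegral_map (ProbabilityTheory.Kernel.measurable_kernel_prodMk_left hs)
        measurable_fst]
    refine lintegral_congr fun q => ?_
    rw [ProbabilityTheory.Kernel.prod_apply]
    have : (Prod.mk q ⁻¹' ((fun q : (X × Y) × (X × Y) => (q.1.1, q.2.1)) ⁻¹' s))
      = (Prod.mk q.1 ⁻¹' s) ×ˢ (Set.univ : Set Y) := by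
      ext z; simp
    rw [this, Measure.prod_prod, measure_univ, mul_one]
    rfl
  · ext s hs
    conv_rhs => rw [← d2, hη]
    have hm : Measurable (fun q : (X × Y) × (X × Y) => (q.1.2, q.2.2)) := by fun_prop
    rw [Measure.map_apply hm hs, Measure.compProd_apply (hm hs), Measure.compProd_apply hs,
      Measure.snd, lintegral_map (ProbabilityTheory.Kernel.measurable_kernel_prodMk_left hs)
        measurable_snd]
    refine lintegral_congr fun q => ?_
    rw [ProbabilityTheory.Kernel.prod_apply]
    have : (Prod.mk q ⁻¹' ((fun q : (X × Y) × (X × Y) => (q.1.2, q.2.2)) ⁻¹' s))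
      = (Set.univ : Set X) ×ˢ (Prod.mk q.2 ⁻¹' s) := by
      ext z; simp
    rw [this, Measure.prod_prod, measure_univ, one_mul]
    rfl

open Filter Topology in
/-- Lower hemicontinuity of the coupling correspondence. -/
lemma ot_lower {X Y : Type*}
    [MetricSpace X] [CompleteSpace X] [SecondCountableTopology X]
    [MeasurableSpace X] [BorelSpace X]
    [MetricSpace Y] [CompleteSpace Y] [SecondCountableTopology Y]
    [MeasurableSpace Y] [BorelSpace Y]
    (p : ProbabilityMeasure X × ProbabilityMeasure Y) (π : ProbabilityMeasure (X × Y))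
    (hπ : π ∈ couplings p.1 p.2) (U : Set (ProbabilityMeasure (X × Y))) (hU : U ∈ 𝓝 π) :
    ∀ᶠ p' in 𝓝 p, ∃ π' ∈ couplings p'.1 p'.2, π' ∈ U := by
  obtain ⟨e, he, heU⟩ : ∃ e > 0, ∀ π' : ProbabilityMeasure (X × Y),
      levyProkhorovDist π'.toMeasure π.toMeasure < e → π' ∈ U := by
    have hc := (LevyProkhorov.continuous_toMeasure_probabilityMeasure (Ω := X × Y)).continuousAt
      (x := LevyProkhorov.ofMeasure π)
    obtain ⟨e, he, h⟩ := Metric.mem_nhds_iff.1 (hc hU)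
    exact ⟨e, he, fun π' h' => @h (LevyProkhorov.ofMeasure π') h'⟩
  set d : ℝ := min (e / 4) (1 / 2) with hd
  have hd0 : 0 < d := by rw [hd]; positivity
  have hd1 : d < 1 := lt_of_le_of_lt (min_le_right _ _) (by norm_num)
  have hde : 2 * d < e := by
    have : d ≤ e / 4 := min_le_left _ _
    linarith
  have e1 := (continuous_fst.tendsto p).eventually (ot_strassen p.1 hd0 hd1)
  have e2 := (continuous_snd.tendsto p).eventually (ot_strassen p.2 hd0 hd1)
  filter_upwards [e1, e2] with p' h1 h2
  obtain ⟨γ, g1, g2, g3⟩ := h1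
  obtain ⟨η, n1, n2, n3⟩ := h2
  have pγ : IsProbabilityMeasure γ := ⟨by rw [← Measure.fst_univ, g1, measure_univ]⟩
  have pη : IsProbabilityMeasure η := ⟨by rw [← Measure.fst_univ, n1, measure_univ]⟩
  obtain ⟨ρ, pρ, r1, r2, r3⟩ := ot_glue π.toMeasure γ η (g1.trans hπ.1.symm) (n1.trans hπ.2.symm)
  refine ⟨⟨ρ.snd, inferInstance⟩, ⟨?_, ?_⟩, heU _ ?_⟩
  · change ρ.snd.map Prod.fst = _
    rw [← g2, ← r2, Measure.snd, Measure.snd, Measure.map_map (by fun_prop) (by fun_prop),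
      Measure.map_map (by fun_prop) (by fun_prop)]
    rfl
  · change ρ.snd.map Prod.snd = _
    rw [← n2, ← r3, Measure.snd, Measure.snd, Measure.map_map (by fun_prop) (by fun_prop),
      Measure.map_map (by fun_prop) (by fun_prop)]
    rfl
  · change levyProkhorovDist ρ.snd π.toMeasure < e
    rw [levyProkhorovDist_comm]
    refine lt_of_le_of_lt ?_ hde
    refine levyProkhorovDist_le_of_forall_le _ _ (by positivity) fun ε B hε hB => ?_
    have b1 : ρ {q | d ≤ dist q.1.1 q.2.1} ≤ ENNReal.ofReal d := by
      rw [← r2, Measure.map_apply (by fun_prop)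
        (isClosed_le continuous_const (by fun_prop)).measurableSet] at g3
      exact g3
    have b2 : ρ {q | d ≤ dist q.1.2 q.2.2} ≤ ENNReal.ofReal d := by
      rw [← r3, Measure.map_apply (by fun_prop)
        (isClosed_le continuous_const (by fun_prop)).measurableSet] at n3
      exact n3
    rw [← r1, Measure.fst_apply hB, Measure.snd_apply Metric.isOpen_thickening.measurableSet]
    calc ρ (Prod.fst ⁻¹' B)
        ≤ ρ (Prod.snd ⁻¹' (Metric.thickening ε B) ∪
            ({q | d ≤ dist q.1.1 q.2.1} ∪ {q | d ≤ dist q.1.2 q.2.2})) := by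
          refine measure_mono fun q hq => ?_
          by_cases c1 : d ≤ dist q.1.1 q.2.1
          · exact Or.inr (Or.inl c1)
          by_cases c2 : d ≤ dist q.1.2 q.2.2
          · exact Or.inr (Or.inr c2)
          refine Or.inl (Metric.mem_thickening_iff.2 ⟨q.1, hq, ?_⟩)
          rw [dist_comm, Prod.dist_eq, max_lt_iff]
          constructor <;> linarith
      _ ≤ ρ (Prod.snd ⁻¹' (Metric.thickening ε B)) +
            (ENNReal.ofReal d + ENNReal.ofReal d) :=
          (measure_union_le _ _).trans (by
            gcongr
            exact (measure_union_le _ _).trans (add_le_add b1 b2))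
      _ ≤ _ := by
          gcongr
          rw [← ENNReal.ofReal_add hd0.le hd0.le]
          exact ENNReal.ofReal_le_ofReal (by linarith)

open Filter Topology in
/-- Upper hemicontinuity: couplings of converging marginals subconverge to a coupling. -/
lemma ot_upper {X Y : Type*}
    [MetricSpace X] [CompleteSpace X] [SecondCountableTopology X]
    [MeasurableSpace X] [BorelSpace X]
    [MetricSpace Y] [CompleteSpace Y] [SecondCountableTopology Y]
    [MeasurableSpace Y] [BorelSpace Y]
    (p : ProbabilityMeasure X × ProbabilityMeasure Y)
    (u : ℕ → ProbabilityMeasure X × ProbabilityMeasure Y) (hu : Tendsto u atTop (𝓝 p))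
    (π : ℕ → ProbabilityMeasure (X × Y)) (hπ : ∀ n, π n ∈ couplings (u n).1 (u n).2) :
    ∃ π₀ ∈ couplings p.1 p.2, ∃ φ : ℕ → ℕ, StrictMono φ ∧ Tendsto (π ∘ φ) atTop (𝓝 π₀) := by
  have hu1 : Tendsto (fun n => (u n).1) atTop (𝓝 p.1) := (continuous_fst.tendsto p).comp hu
  have hu2 : Tendsto (fun n => (u n).2) atTop (𝓝 p.2) := (continuous_snd.tendsto p).comp hu
  have t1 := isTightMeasureSet_of_isCompact_closure
    (hu1.isCompact_insert_range.closure_of_subset (Set.subset_insert _ _))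
  have t2 := isTightMeasureSet_of_isCompact_closure
    (hu2.isCompact_insert_range.closure_of_subset (Set.subset_insert _ _))
  have t : IsTightMeasureSet {x | ∃ μ ∈ Set.range π, (μ : Measure (X × Y)) = x} := by
    refine IsTightMeasureSet.prodMk (t1.subset ?_) (t2.subset ?_)
    · rintro _ ⟨_, ⟨_, ⟨n, rfl⟩, rfl⟩, rfl⟩
      exact ⟨(u n).1, ⟨n, rfl⟩, (hπ n).1.symm⟩
    · rintro _ ⟨_, ⟨_, ⟨n, rfl⟩, rfl⟩, rfl⟩
      exact ⟨(u n).2, ⟨n, rfl⟩, (hπ n).2.symm⟩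
  obtain ⟨π₀, -, φ, hφ, hlim⟩ := (isCompact_closure_of_isTightMeasureSet t).tendsto_subseq
    (x := π) (fun n => subset_closure ⟨n, rfl⟩)
  refine ⟨π₀, ⟨?_, ?_⟩, φ, hφ, hlim⟩
  · have a1 := ((ProbabilityMeasure.continuous_map
      (continuous_fst : Continuous (Prod.fst : X × Y → X))).tendsto π₀).comp hlim
    have a2 := hu1.comp hφ.tendsto_atTop
    have := tendsto_nhds_unique (a1.congr fun n => ?_) a2
    · exact congrArg ProbabilityMeasure.toMeasure this
    · exact Subtype.ext (hπ (φ n)).1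
  · have a1 := ((ProbabilityMeasure.continuous_map
      (continuous_snd : Continuous (Prod.snd : X × Y → Y))).tendsto π₀).comp hlim
    have a2 := hu2.comp hφ.tendsto_atTop
    have := tendsto_nhds_unique (a1.congr fun n => ?_) a2
    · exact congrArg ProbabilityMeasure.toMeasure this
    · exact Subtype.ext (hπ (φ n)).2

/-- The optimal transport value function is continuous in the marginals for the weak
topologies, when the surplus `Φ` is bounded continuous. -/
theorem value_function_continuous
    [MetricSpace X] [CompleteSpace X] [SecondCountableTopology X]
    [MeasurableSpace X] [BorelSpace X]
    [MetricSpace Y] [CompleteSpace Y] [SecondCountableTopology Y]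
    [MeasurableSpace Y] [BorelSpace Y]
    (Φ : X × Y → ℝ) (hΦc : Continuous Φ) (hΦb : ∃ C, ∀ p, |Φ p| ≤ C) :
    Continuous (fun p : ProbabilityMeasure X × ProbabilityMeasure Y =>
      sSup {r : ℝ | ∃ π ∈ couplings p.1 p.2, r = ∫ q, Φ q ∂π.toMeasure}) := by
  obtain ⟨C, hC⟩ := hΦb
  have hcont : Continuous fun π : ProbabilityMeasure (X × Y) => ∫ q, Φ q ∂π.toMeasure :=
    ProbabilityMeasure.continuous_integral_boundedContinuousFunction
      (BoundedContinuousFunction.ofNormedAddCommGroup Φ hΦc C hC)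
  have hbdd : ∀ p : ProbabilityMeasure X × ProbabilityMeasure Y,
      BddAbove {r : ℝ | ∃ π ∈ couplings p.1 p.2, r = ∫ q, Φ q ∂π.toMeasure} := by
    rintro p
    refine ⟨C, ?_⟩
    rintro _ ⟨π, -, rfl⟩
    have := norm_integral_le_of_norm_le_const (μ := π.toMeasure) (f := Φ) (C := C)
      (Filter.Eventually.of_forall hC)
    rw [probReal_univ, mul_one] at this
    exact (le_abs_self _).trans this
  have hne : ∀ p : ProbabilityMeasure X × ProbabilityMeasure Y,
      {r : ℝ | ∃ π ∈ couplings p.1 p.2, r = ∫ q, Φ q ∂π.toMeasure}.Nonempty := by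
    intro p
    refine ⟨_, p.1.prod p.2, ⟨?_, ?_⟩, rfl⟩
    · simp
    · simp
  rw [continuous_iff_continuousAt]
  intro p
  refine tendsto_order.2 ⟨fun a ha => ?_, fun a ha => ?_⟩
  · obtain ⟨_, ⟨π, hπ, rfl⟩, hlt⟩ := exists_lt_of_lt_csSup (hne p) ha
    have hU := hcont.continuousAt.eventually (lt_mem_nhds hlt)
    filter_upwards [ot_lower p π hπ _ hU] with p' hp'
    obtain ⟨π', h1, h2⟩ := hp'
    exact lt_of_lt_of_le h2 (le_csSup (hbdd p') ⟨π', h1, rfl⟩)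
  · by_contra hcon
    rw [Filter.not_eventually] at hcon
    obtain ⟨u, hu, hua⟩ := Filter.exists_seq_forall_of_frequently hcon
    obtain ⟨b, hb1, hb2⟩ := exists_between ha
    have : ∀ n, ∃ π ∈ couplings (u n).1 (u n).2, b < ∫ q, Φ q ∂π.toMeasure := by
      intro n
      obtain ⟨_, ⟨π, hπ, rfl⟩, hlt⟩ :=
        exists_lt_of_lt_csSup (hne (u n)) (lt_of_lt_of_le hb2 (not_lt.1 (hua n)))
      exact ⟨π, hπ, hlt⟩
    choose π hπ hbπ using this
    obtain ⟨π₀, h0, φ, -, hlim⟩ := ot_upper p u hu π hπ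
    have hge : b ≤ ∫ q, Φ q ∂π₀.toMeasure :=
      ge_of_tendsto ((hcont.tendsto π₀).comp hlim)
        (Filter.Eventually.of_forall fun n => (hbπ (φ n)).le)
    exact absurd (hge.trans (le_csSup (hbdd p) ⟨π₀, h0, rfl⟩)) (not_le.2 hb1)
end
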